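/- arXiv:2506.22731 — 3 statements merged into one kernel-verified Lean document; each statement's English description precedes it below -/
import Mathlib

section
/- Let φ : ℝ → ℝ be a smooth function satisfying the graph-like forward self-similar profile equation. Then for every x ∈ ℝ, (1/v(x))·d/dx[ (1/v(x))·d/dx( k(x)² + (x² + φ(x)²)/4 ) ] = 1/2 + 2·( k'(x)/v(x) )², i.e. ∂ₛ²( k² + |x|²/4 ) = 1/2 + 2(∂ₛk)² along the graph of φ. -/
/-- For a smooth graph-like forward self-similar profile `φ`, with
`v = √(1 + φ'²)`, curvature `k = φ''/v³` and arclength derivative `∂ₛ f = f'/v`,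
one has `∂ₛ²(k² + |x|²/4) = 1/2 + 2 (∂ₛ k)²` along the graph of `φ`. -/
theorem stmt_4 (φ v k : ℝ → ℝ) (hφ : ContDiff ℝ (⊤ : ℕ∞) φ)
    (hv : ∀ x, v x = Real.sqrt (1 + deriv φ x ^ 2))
    (hk : ∀ x, k x = deriv (deriv φ) x / v x ^ 3)
    (hprofile : ∀ x : ℝ,
      (φ x - x * deriv φ x) / 4 = -deriv (fun t => deriv k t / v t) x) :
    ∀ x : ℝ,
      (1 / v x) * deriv (fun t => (1 / v t) *
          deriv (fun u => k u ^ 2 + (u ^ 2 + φ u ^ 2) / 4) t) x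
        = 1 / 2 + 2 * (deriv k x / v x) ^ 2 := by
  have h1 : ContDiff ℝ (⊤ : ℕ∞) (deriv φ) := (contDiff_infty_iff_deriv.1 hφ).2
  have h2 : ContDiff ℝ (⊤ : ℕ∞) (deriv (deriv φ)) := (contDiff_infty_iff_deriv.1 h1).2
  have hpos : ∀ x, 0 < 1 + deriv φ x ^ 2 := fun x => by positivity
  have hvpos : ∀ x, 0 < v x := fun x => by rw [hv]; exact Real.sqrt_pos.2 (hpos x)
  have hvsq : ∀ x, v x ^ 2 = 1 + deriv φ x ^ 2 := fun x => by
    rw [hv]; exact Real.sq_sqrt (hpos x).le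
  have hvs : ContDiff ℝ (⊤ : ℕ∞) v := by
    rw [funext hv]
    exact (contDiff_const.add (h1.pow 2)).sqrt (fun x => (hpos x).ne')
  have hks : ContDiff ℝ (⊤ : ℕ∞) k := by
    rw [funext hk]
    exact h2.div (hvs.pow 3) (fun x => (pow_pos (hvpos x) 3).ne')
  have hk1 : ContDiff ℝ (⊤ : ℕ∞) (deriv k) := (contDiff_infty_iff_deriv.1 hks).2
  have hd : ∀ {f : ℝ → ℝ}, ContDiff ℝ (⊤ : ℕ∞) f → ∀ x, HasDerivAt f (deriv f x) x :=
    fun hf x => ((contDiff_infty_iff_deriv.1 hf).1 x).hasDerivAt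
  intro x
  have hinner : (fun t => (1 / v t) *
      deriv (fun u => k u ^ 2 + (u ^ 2 + φ u ^ 2) / 4) t)
      = fun t => 2 * (k t * (deriv k t / v t)) + (t + φ t * deriv φ t) / (2 * v t) := by
    funext t
    have h := (((hd hks t).pow 2).add
      ((((hasDerivAt_id t).pow 2).add ((hd hφ t).pow 2)).div_const 4))
    have h' : deriv (fun u => k u ^ 2 + (u ^ 2 + φ u ^ 2) / 4) t = _ := h.deriv
    rw [h']
    have := (hvpos t).ne'
    simp
    field_simp
    ring
  have hv' : deriv v x = deriv φ x * deriv (deriv φ) x / v x := by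
    have ha := ((hd hvs x).pow 2)
    have hb := ((hd h1 x).pow 2).const_add 1
    have he : v ^ 2 = fun y => 1 + (deriv φ ^ 2) y := by
      funext y; simpa using hvsq y
    rw [he] at ha
    have := ha.unique hb
    have hne := (hvpos x).ne'
    simp at this
    field_simp
    linarith
  have hw := hd (hk1.div hvs (fun x => (hvpos x).ne')) x
  have hp := hprofile x
  have hw' : HasDerivAt (fun t => deriv k t / v t) (-((φ x - x * deriv φ x) / 4)) x := by
    rw [hp, neg_neg]; exact hw
  have hne := (hvpos x).ne'
  have hfin := (((hd hks x).mul hw').const_mul 2).add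
    (((hasDerivAt_id x).add ((hd hφ x).mul (hd h1 x))).div ((hd hvs x).const_mul 2)
      (mul_ne_zero two_ne_zero hne))
  have hfin' : deriv (fun t => 2 * (k t * (deriv k t / v t))
      + (t + φ t * deriv φ t) / (2 * v t)) x = _ := hfin.deriv
  rw [hinner, hfin', hv']
  have hkx := hk x
  have hs := hvsq x
  simp
  rw [hkx]
  generalize deriv k x = K
  generalize deriv (deriv φ) x = q at *
  generalize deriv φ x = p at *
  generalize v x = V at *
  generalize φ x = f at *
  field_simp
  have h4 : p ^ 2 = V ^ 2 - 1 := by linarith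
  linear_combination (4 * V ^ 2 - 4 * q * f) * h4
end

section
/- Let φ : ℝ → ℝ be a smooth function satisfying the graph-like forward self-similar profile equation. If there exist α, β ∈ ℝ such that φ(0)·φ(x₁) ≤ α·s(x₁) + β for all x₁ ∈ ℝ, then φ is linear through the origin: there exists c ∈ ℝ such that φ(x₁) = c·x₁ for all x₁ ∈ ℝ. -/
theorem aux_escape (f u : ℝ → ℝ) (M b : ℝ) (hf : ∀ x, HasDerivAt f (u x) x)
    (hM : ∀ x, |f x| ≤ M) (hb : ∀ x, b ≤ x → 1 ≤ u x) : False := by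
  have hmono : MonotoneOn (fun x => f x - x) (Set.Ici b) := by
    apply monotoneOn_of_hasDerivWithinAt_nonneg (f' := fun x => u x - 1) (convex_Ici b)
    · exact fun x _ => ((hf x).sub (hasDerivAt_id' x)).continuousAt.continuousWithinAt
    · exact fun x _ => ((hf x).sub (hasDerivAt_id' x)).hasDerivWithinAt
    · intro x hx
      rw [interior_Ici] at hx
      have := hb x (le_of_lt hx)
      linarith
  have hM0 : 0 ≤ M := (abs_nonneg _).trans (hM 0)
  have h := hmono (Set.self_mem_Ici : b ∈ Set.Ici b) (show b + (2 * M + 1) ∈ Set.Ici b by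
    simp only [Set.mem_Ici]; linarith) (by linarith)
  have h1 := abs_le.1 (hM b)
  have h2 := abs_le.1 (hM (b + (2 * M + 1)))
  simp only at h
  linarith [h1.1, h2.2]

theorem aux_growth (f u P P' : ℝ → ℝ) (M a c : ℝ) (hf : ∀ x, HasDerivAt f (u x) x)
    (hu : Continuous u) (hM : ∀ x, |f x| ≤ M) (hP : ∀ x, HasDerivAt P (P' x) x)
    (hc : 0 < c) (hP' : ∀ x, a ≤ x → c ≤ P' x) (hle : ∀ x, P x ≤ u x ^ 2 / 2) : False := by
  have hmono : MonotoneOn (fun x => P x - c * x) (Set.Ici a) := by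
    apply monotoneOn_of_hasDerivWithinAt_nonneg (f' := fun x => P' x - c * 1) (convex_Ici a)
    · exact fun x _ =>
        ((hP x).sub ((hasDerivAt_id' x).const_mul c)).continuousAt.continuousWithinAt
    · exact fun x _ => ((hP x).sub ((hasDerivAt_id' x).const_mul c)).hasDerivWithinAt
    · intro x hx
      rw [interior_Ici] at hx
      have := hP' x (le_of_lt hx)
      linarith
  set b := max a ((1 - P a + c * a) / c) with hb
  have hab : a ≤ b := le_max_left _ _
  have hu1 : ∀ x, b ≤ x → 1 ≤ u x ^ 2 := by
    intro x hx
    have h := hmono (Set.self_mem_Ici : a ∈ Set.Ici a) (show x ∈ Set.Ici a from hab.trans hx)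
      (hab.trans hx)
    have h2 : (1 - P a + c * a) / c ≤ x := (le_max_right _ _).trans hx
    rw [div_le_iff₀ hc] at h2
    have := hle x
    simp only at h
    linarith
  have key : (∀ x, b ≤ x → 0 < u x) ∨ (∀ x, b ≤ x → u x < 0) := by
    by_contra hcon
    push Not at hcon
    obtain ⟨⟨x, hx, hx'⟩, y, hy, hy'⟩ := hcon
    have := (isPreconnected_Ici (a := b)).intermediate_value (show x ∈ Set.Ici b from hx)
      (show y ∈ Set.Ici b from hy) hu.continuousOn ⟨hx', hy'⟩
    obtain ⟨z, hz, hz'⟩ := this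
    have := hu1 z hz
    rw [hz'] at this
    norm_num at this
  rcases key with h | h
  · exact aux_escape f u M b hf hM fun x hx => by nlinarith [h x hx, hu1 x hx]
  · exact aux_escape (fun x => -f x) (fun x => -u x) M b (fun x => (hf x).neg)
      (fun x => by simpa using hM x) fun x hx => by nlinarith [h x hx, hu1 x hx]

theorem aux_arc (φ p v s : ℝ → ℝ) (hφ : ∀ x, HasDerivAt φ (p x) x)
    (hs : ∀ x, HasDerivAt s (v x) x) (hs0 : s 0 = 0) (hv0 : ∀ x, 0 < v x)
    (hv : ∀ x, v x ^ 2 = 1 + p x ^ 2) (x : ℝ) : x ^ 2 + (φ x - φ 0) ^ 2 ≤ s x ^ 2 := by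
  set a := x
  set b := φ x - φ 0 with hb
  set L := Real.sqrt (a ^ 2 + b ^ 2) with hL
  have hL0 : 0 ≤ L := Real.sqrt_nonneg _
  have hL2 : L ^ 2 = a ^ 2 + b ^ 2 := Real.sq_sqrt (by positivity)
  have hcs : ∀ y, |a + b * p y| ≤ L * v y := by
    intro y
    apply abs_le_of_sq_le_sq _ (mul_nonneg hL0 (hv0 y).le)
    rw [mul_pow, hL2, hv]
    nlinarith [sq_nonneg (a * p y - b)]
  have hd : ∀ e : ℝ, ∀ y, HasDerivAt (fun y => L * s y + e * (a * y + b * φ y))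
      (L * v y + e * (a * 1 + b * p y)) y := fun e y =>
    ((hs y).const_mul L).add ((((hasDerivAt_id' y).const_mul a).add ((hφ y).const_mul b)).const_mul e)
  have hm : ∀ e : ℝ, |e| = 1 → Monotone (fun y => L * s y + e * (a * y + b * φ y)) := by
    intro e he
    apply monotone_of_hasDerivAt_nonneg (hd e)
    intro y
    have h1 := hcs y
    have h2 : |e * (a + b * p y)| ≤ L * v y := by rw [abs_mul, he, one_mul]; exact h1
    have := (abs_le.1 h2).1
    simp only [Pi.zero_apply]
    linarith
  rw [← hL2]
  rcases le_total 0 x with h | h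
  · have h1 := hm (-1) (by norm_num) h
    simp only [hs0] at h1
    have h3 : L * L ≤ L * s x := by nlinarith
    rcases hL0.eq_or_lt with h0 | h0
    · rw [← h0]; nlinarith [sq_nonneg (s x)]
    · have := le_of_mul_le_mul_left h3 h0
      nlinarith
  · have h1 := hm 1 (by norm_num) h
    simp only [hs0] at h1
    have h3 : L * L ≤ L * (-s x) := by nlinarith
    rcases hL0.eq_or_lt with h0 | h0
    · rw [← h0]; nlinarith [sq_nonneg (s x)]
    · have := le_of_mul_le_mul_left h3 h0
      nlinarith

/-- If a graph-like forward self-similar profile `φ` satisfies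
`φ(0) φ(x₁) ≤ α s(x₁) + β` for some `α, β`, then `φ` is linear through the origin. -/
theorem stmt_8 (φ v k s : ℝ → ℝ) (hφ : ContDiff ℝ (⊤ : ℕ∞) φ)
    (hv : ∀ x, v x = Real.sqrt (1 + deriv φ x ^ 2))
    (hk : ∀ x, k x = deriv (deriv φ) x / v x ^ 3)
    (hs : ∀ x₁, s x₁ = ∫ z in (0:ℝ)..x₁, Real.sqrt (1 + deriv φ z ^ 2))
    (hprofile : ∀ x : ℝ,
      (φ x - x * deriv φ x) / 4 = -deriv (fun t => deriv k t / v t) x)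
    (α β : ℝ)
    (hbound : ∀ x₁ : ℝ, φ 0 * φ x₁ ≤ α * s x₁ + β) :
    ∃ c : ℝ, ∀ x₁ : ℝ, φ x₁ = c * x₁ := by
  set p := deriv φ with hp
  have hpC : ContDiff ℝ (⊤ : ℕ∞) p := (contDiff_infty_iff_deriv.1 hφ).2
  set q := deriv p with hq
  have hqC : ContDiff ℝ (⊤ : ℕ∞) q := (contDiff_infty_iff_deriv.1 hpC).2
  have hvE : v = fun x => Real.sqrt (1 + p x ^ 2) := funext hv
  have hv0 : ∀ x, 0 < v x := fun x => by rw [hv]; exact Real.sqrt_pos.2 (by positivity)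
  have hv2 : ∀ x, v x ^ 2 = 1 + p x ^ 2 := fun x => by
    rw [hv]; exact Real.sq_sqrt (by positivity)
  have hv1 : ∀ x, 1 ≤ v x := fun x => by nlinarith [hv0 x, hv2 x, sq_nonneg (p x)]
  have hvC : ContDiff ℝ (⊤ : ℕ∞) v := by
    rw [hvE]
    exact (contDiff_const.add (hpC.pow 2)).sqrt (fun x => by positivity)
  have hkC : ContDiff ℝ (⊤ : ℕ∞) k := by
    rw [show k = fun x => q x / v x ^ 3 from funext hk]
    exact hqC.div (hvC.pow 3) (fun x => (pow_pos (hv0 x) 3).ne')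
  set w : ℝ → ℝ := fun t => deriv k t / v t with hw
  have hwC : ContDiff ℝ (⊤ : ℕ∞) w :=
    (contDiff_infty_iff_deriv.1 hkC).2.div hvC (fun x => (hv0 x).ne')
  have dφ : ∀ x, HasDerivAt φ (p x) x := fun x =>
    ((contDiff_infty_iff_deriv.1 hφ).1 x).hasDerivAt
  have dp : ∀ x, HasDerivAt p (k x * v x ^ 3) x := fun x => by
    have := ((contDiff_infty_iff_deriv.1 hpC).1 x).hasDerivAt
    rw [hk, div_mul_cancel₀ _ (pow_pos (hv0 x) 3).ne']
    exact this
  have dk : ∀ x, HasDerivAt k (w x * v x) x := fun x => by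
    have := ((contDiff_infty_iff_deriv.1 hkC).1 x).hasDerivAt
    simp only [hw]
    rwa [div_mul_cancel₀ _ (hv0 x).ne']
  have dw : ∀ x, HasDerivAt w (-((φ x - x * p x) / 4)) x := fun x => by
    have := ((contDiff_infty_iff_deriv.1 hwC).1 x).hasDerivAt
    rw [hprofile x, neg_neg]
    exact this
  have dv : ∀ x, HasDerivAt v (p x * k x * v x ^ 2) x := fun x => by
    have h1 : HasDerivAt (fun y => 1 + p y ^ 2) (2 * p x * (k x * v x ^ 3)) x := by
      refine (((dp x).pow 2).const_add 1).congr_deriv ?_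
      norm_num
    have h := h1.sqrt (by positivity)
    rw [← hv x, ← hvE] at h
    refine h.congr_deriv ?_
    have h0 := (hv0 x).ne'
    field_simp
  have ds : ∀ x, HasDerivAt s (v x) x := fun x => by
    rw [show s = fun x => ∫ z in (0:ℝ)..x, v z from funext fun x => by
      rw [hs]; simp only [hv]]
    exact intervalIntegral.integral_hasDerivAt_right (hvC.continuous.intervalIntegrable _ _)
      hvC.continuous.stronglyMeasurable.stronglyMeasurableAtFilter hvC.continuous.continuousAt
  have hs0 : s 0 = 0 := by rw [hs]; simp
  have hArc := aux_arc φ p v s dφ ds hs0 hv0 hv2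
  have dθ : ∀ x, HasDerivAt (fun x => Real.arctan (p x)) (k x * v x) x := fun x => by
    convert (dp x).arctan using 1
    rw [← hv2]
    have := (hv0 x).ne'
    field_simp
  have hθ : ∀ x, |Real.arctan (p x)| ≤ Real.pi / 2 := fun x =>
    abs_le.2 ⟨(Real.neg_pi_div_two_lt_arctan _).le, (Real.arctan_lt_pi_div_two _).le⟩
  set g : ℝ → ℝ := fun x => k x * w x + (x + φ x * p x) / v x / 4 - s x / 4 with hg
  have dg : ∀ x, HasDerivAt g (v x * w x ^ 2) x := fun x => by
    have h := (((dk x).mul (dw x)).add (((((hasDerivAt_id' x).add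
      ((dφ x).mul (dp x))).div (dv x) (hv0 x).ne')).div_const 4)).sub ((ds x).div_const 4)
    refine h.congr_deriv ?_
    have h0 := (hv0 x).ne'
    have h2 := hv2 x
    simp only [Pi.add_apply, Pi.mul_apply]
    field_simp
    have hp2 : p x ^ 2 = v x ^ 2 - 1 := by linarith
    ring_nf
    simp only [hp2]
    ring
  set P : ℝ → ℝ := fun x => k x ^ 2 / 2 + (x ^ 2 + φ x ^ 2) / 8 - s x ^ 2 / 8 - α / 4 * s x
    - (2 * β - φ 0 ^ 2) / 8 with hP
  have dP : ∀ x, HasDerivAt P (v x * (g x - α / 4)) x := fun x => by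
    have h := ((((((dk x).pow 2).div_const 2).add ((((hasDerivAt_id' x).pow 2).add
      ((dφ x).pow 2)).div_const 8)).sub (((ds x).pow 2).div_const 8)).sub
      ((ds x).const_mul (α / 4))).sub_const ((2 * β - φ 0 ^ 2) / 8)
    refine h.congr_deriv ?_
    have h0 := (hv0 x).ne'
    simp only [hg]
    field_simp
    push_cast
    ring
  have hPle : ∀ x, P x ≤ (k x * v x) ^ 2 / 2 := fun x => by
    have h1 := hArc x
    have h2 := hbound x
    have h3 : k x ^ 2 ≤ (k x * v x) ^ 2 := by
      rw [mul_pow]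
      exact le_mul_of_one_le_right (sq_nonneg _) (by nlinarith [hv1 x])
    simp only [hP]
    nlinarith
  have hgm : Monotone g := monotone_of_hasDerivAt_nonneg dg fun x => by
    have := hv0 x
    simp only [Pi.zero_apply]
    positivity
  have hcont : Continuous fun x => k x * v x := hkC.continuous.mul hvC.continuous
  have hgc : ∀ a, g a = α / 4 := by
    intro a
    rcases lt_trichotomy (g a) (α / 4) with h | h | h
    · exfalso
      refine aux_growth (fun x => -Real.arctan (p (-x))) (fun x => k (-x) * v (-x))
        (fun x => P (-x)) (fun x => -(v (-x) * (g (-x) - α / 4))) (Real.pi / 2) (-a)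
        (α / 4 - g a) ?_ (hcont.comp continuous_neg) ?_ ?_ (by linarith) ?_ (fun x => hPle (-x))
      · intro x
        have := ((dθ (-x)).comp x (hasDerivAt_neg x)).neg
        refine this.congr_deriv (by ring)
      · intro x
        rw [abs_neg]; exact hθ (-x)
      · intro x
        have := ((dP (-x)).comp x (hasDerivAt_neg x))
        refine this.congr_deriv (by ring)
      · intro x hx
        have h1 : g (-x) ≤ g a := hgm (by linarith)
        nlinarith [hv1 (-x)]
    · exact h
    · exfalso
      refine aux_growth _ _ P _ (Real.pi / 2) a (g a - α / 4) dθ hcont hθ dP (by linarith) ?_ hPle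
      intro x hx
      have h1 : g a ≤ g x := hgm hx
      nlinarith [hv1 x]
  have hw0 : ∀ x, w x = 0 := by
    intro x
    have h1 : HasDerivAt g 0 x := by
      rw [show g = fun _ => α / 4 from funext hgc]
      exact hasDerivAt_const x _
    have h2 := (dg x).unique h1
    rcases mul_eq_zero.1 h2 with h | h
    · exact absurd h (hv0 x).ne'
    · exact pow_eq_zero_iff (two_ne_zero) |>.1 h
  have hlin : ∀ x, φ x = x * p x := by
    intro x
    have h1 : HasDerivAt w 0 x := by
      rw [show w = fun _ => 0 from funext hw0]
      exact hasDerivAt_const x _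
    have h2 := (dw x).unique h1
    linarith
  have hk0 : ∀ x, k x = k 0 := fun x =>
    is_const_of_deriv_eq_zero (fun y => (dk y).differentiableAt)
      (fun y => by rw [(dk y).deriv, hw0, zero_mul]) x 0
  have hk1 : k 1 = 0 := by
    have h1 : HasDerivAt φ (1 * p 1 + 1 * (k 1 * v 1 ^ 3)) 1 := by
      have := (hasDerivAt_id' (1:ℝ)).mul (dp 1)
      rw [show φ = (fun x => x) * p from funext hlin]
      exact this
    have h2 := (dφ 1).unique h1
    have h3 : k 1 * v 1 ^ 3 = 0 := by linarith
    exact (mul_eq_zero.1 h3).resolve_right (pow_pos (hv0 1) 3).ne'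
  have hpc : ∀ x, p x = p 0 := fun x =>
    is_const_of_deriv_eq_zero (fun y => (dp y).differentiableAt)
      (fun y => by rw [(dp y).deriv, hk0, ← hk0 1, hk1, zero_mul]) x 0
  exact ⟨p 0, fun x => by rw [hlin, hpc, mul_comm]⟩
end

section
/- Let φ : ℝ → ℝ be a smooth function satisfying the graph-like forward self-similar profile equation. Assume φ is globally Lipschitz (i.e. φ' is bounded on ℝ) and φ' − a₀ is integrable on ℝ for some a₀ ∈ ℝ. Then φ(x₁) = a₀·x₁ for all x₁ ∈ ℝ. -/
open MeasureTheory Filter Topology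

/-- derivative of `u / √(1+u²)` -/
lemma aux_q (y : ℝ) : HasDerivAt (fun y : ℝ => y / Real.sqrt (1 + y ^ 2))
    (1 / Real.sqrt (1 + y ^ 2) ^ 3) y := by
  have h0 : 0 < 1 + y ^ 2 := by positivity
  have hs : 0 < Real.sqrt (1 + y ^ 2) := Real.sqrt_pos.2 h0
  have h1 : HasDerivAt (fun y : ℝ => 1 + y ^ 2) (2 * y) y := by
    simpa using (hasDerivAt_pow 2 y).const_add 1
  have h2 := (hasDerivAt_id y).div (h1.sqrt h0.ne') hs.ne'
  refine h2.congr_deriv ?_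
  have hsq := Real.sq_sqrt h0.le
  simp only [id]
  generalize Real.sqrt (1 + y ^ 2) = s at *
  field_simp
  linarith

lemma aux_F (y : ℝ) : HasDerivAt (fun y : ℝ => Real.sqrt (1 + y ^ 2))
    (y / Real.sqrt (1 + y ^ 2)) y := by
  have h0 : 0 < 1 + y ^ 2 := by positivity
  have hs : 0 < Real.sqrt (1 + y ^ 2) := Real.sqrt_pos.2 h0
  have h1 : HasDerivAt (fun y : ℝ => 1 + y ^ 2) (2 * y) y := by
    simpa using (hasDerivAt_pow 2 y).const_add 1
  refine (h1.sqrt h0.ne').congr_deriv ?_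
  field_simp

lemma aux_lip (u a : ℝ) :
    |u / Real.sqrt (1 + u ^ 2) - a / Real.sqrt (1 + a ^ 2)| ≤ |u - a| := by
  have := Convex.norm_image_sub_le_of_norm_hasDerivWithin_le (s := Set.univ) (C := 1)
    (f := fun y : ℝ => y / Real.sqrt (1 + y ^ 2)) (x := a) (y := u)
    (fun x _ => (aux_q x).hasDerivWithinAt) (fun x _ => by
      have h1 : 1 ≤ Real.sqrt (1 + x ^ 2) := Real.one_le_sqrt.2 (by nlinarith [sq_nonneg x])
      rw [Real.norm_of_nonneg (by positivity)]
      rw [div_le_one (by positivity)]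
      exact one_le_pow₀ h1) convex_univ trivial trivial
  simpa using this

/-- pointwise quadratic inequality -/
lemma aux_quad (v a b c d V : ℝ) (hv : 1 ≤ v) (hV : v ≤ V) :
    -(512 * V * c ^ 2 + 256 * c ^ 2 + 256 * d ^ 2) ≤
      4 * v * a ^ 2 + 16 * a * b + 64 * (b ^ 2 + v * a * c + 2 * b * c + 2 * b * d) := by
  have h1 : 0 ≤ 2 * v * (a + 16 * c) ^ 2 := by positivity
  have h2 : 0 ≤ (V - v) * c ^ 2 := mul_nonneg (by linarith) (sq_nonneg c)
  have h3 : 0 ≤ (v - 1) * a ^ 2 := mul_nonneg (by linarith) (sq_nonneg a)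
  nlinarith [sq_nonneg (a + 4 * b), sq_nonneg (b + 4 * c), sq_nonneg (b + 4 * d)]

lemma aux_E (u a : ℝ) : 
    0 ≤ Real.sqrt (1 + u ^ 2) - (1 + a * u) / Real.sqrt (1 + a ^ 2) ∧
    (Real.sqrt (1 + u ^ 2) - (1 + a * u) / Real.sqrt (1 + a ^ 2) = 0 → u = a) := by
  have hs : 0 < Real.sqrt (1 + u ^ 2) := Real.sqrt_pos.2 (by positivity)
  have ht : 0 < Real.sqrt (1 + a ^ 2) := Real.sqrt_pos.2 (by positivity)
  have hs2 := Real.sq_sqrt (show 0 ≤ 1 + u ^ 2 by positivity)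
  have ht2 := Real.sq_sqrt (show 0 ≤ 1 + a ^ 2 by positivity)
  generalize Real.sqrt (1 + u ^ 2) = s at *
  generalize Real.sqrt (1 + a ^ 2) = t at *
  have key : (s * t) ^ 2 = (1 + a * u) ^ 2 + (u - a) ^ 2 := by
    rw [mul_pow, hs2, ht2]; ring
  constructor
  · rw [sub_nonneg, div_le_iff₀ ht]
    exact le_of_sq_le_sq' key (by positivity)
  · intro h
    rw [sub_eq_zero, eq_div_iff ht.ne'] at h
    rw [h] at key
    have : (u - a) ^ 2 = 0 := by linarith
    have := pow_eq_zero_iff (two_ne_zero) |>.1 this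
    linarith
where le_of_sq_le_sq' {x y z : ℝ} (h : x ^ 2 = y ^ 2 + z ^ 2) (hx : 0 ≤ x) : y ≤ x :=
  le_of_abs_le (abs_le_of_sq_le_sq (by nlinarith [sq_nonneg z]) hx)

lemma aux_E_le (u a : ℝ) : 
    Real.sqrt (1 + u ^ 2) - (1 + a * u) / Real.sqrt (1 + a ^ 2) ≤
     (u - a) * (u / Real.sqrt (1 + u ^ 2) - a / Real.sqrt (1 + a ^ 2)) := by
  have h := (aux_E a u).1
  have hs : 0 < Real.sqrt (1 + u ^ 2) := Real.sqrt_pos.2 (by positivity)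
  have ht : 0 < Real.sqrt (1 + a ^ 2) := Real.sqrt_pos.2 (by positivity)
  have hs2 := Real.sq_sqrt (show 0 ≤ 1 + u ^ 2 by positivity)
  have ht2 := Real.sq_sqrt (show 0 ≤ 1 + a ^ 2 by positivity)
  generalize Real.sqrt (1 + u ^ 2) = s at *
  generalize Real.sqrt (1 + a ^ 2) = t at *
  have : (u - a) * (u / s - a / t) - (s - (1 + a * u) / t) = t - (1 + u * a) / s := by
    field_simp
    linear_combination (-t) * hs2 - s * ht2
  linarith

set_option maxHeartbeats 1000000 in
/-- The bound on the remaining (lower order) terms. -/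
lemma aux_rest (x R g w h E M G : ℝ) (hR : 1 ≤ R) (hx : |x| ≤ R) (hh : |h| ≤ |g|)
    (hg : |g| ≤ G) (hE0 : 0 ≤ E) (hE : E ≤ G * |g|) (hw : |w| ≤ M) (V : ℝ) (hV : 1 ≤ V) :
    E * (1 - x ^ 2 / R ^ 2) ^ 4
      - (16 * G + 8 * M + (8192 * V + 5120) * G) * |g| * (1 / R + x ^ 2 / R ^ 2) ≤
    E * (1 - x ^ 2 / R ^ 2) ^ 4
     - 4 * (x * g - w) * h * (1 - x ^ 2 / R ^ 2) ^ 3 * (-2 * x / R ^ 2)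
     + 4 * x * E * (1 - x ^ 2 / R ^ 2) ^ 3 * (-2 * x / R ^ 2)
     - (512 * V * (h * (-2 * x / R ^ 2) ^ 2) ^ 2 + 256 * (h * (-2 * x / R ^ 2) ^ 2) ^ 2
        + 256 * (h * (1 - x ^ 2 / R ^ 2) * (-2 / R ^ 2)) ^ 2) := by
  have hR0 : 0 < R := by linarith
  obtain ⟨y, rfl⟩ : ∃ y, x = y * R := ⟨x / R, by field_simp⟩
  obtain ⟨r, rfl⟩ : ∃ r, R = 1 / r := ⟨1 / R, by field_simp⟩
  have hr0 : 0 < r := by simpa using hR0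
  have hr1 : r ≤ 1 := by
    rw [le_div_iff₀ hr0] at hR; linarith
  have hy : |y| ≤ 1 := by
    rw [abs_mul, abs_of_pos hR0] at hx
    exact le_of_mul_le_mul_right (by simpa using hx) hR0
  have e1 : (y * (1 / r)) ^ 2 / (1 / r) ^ 2 = y ^ 2 := by field_simp
  have e2 : -2 * (y * (1 / r)) / (1 / r) ^ 2 = -2 * y * r := by field_simp
  have e3 : -2 / (1 / r) ^ 2 = -2 * r ^ 2 := by field_simp
  rw [e1, e2, e3, one_div_one_div]
  have hy2 : y ^ 2 ≤ 1 := by rw [← sq_abs]; exact pow_le_one₀ (abs_nonneg _) hy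
  set χ := 1 - y ^ 2 with hχ
  have hχ0 : 0 ≤ χ := by linarith
  have hχ1 : χ ≤ 1 := by nlinarith [sq_nonneg y]
  have hχ3 : χ ^ 3 ≤ 1 := pow_le_one₀ hχ0 hχ1
  have hχ30 : 0 ≤ χ ^ 3 := by positivity
  have hG : 0 ≤ G := (abs_nonneg _).trans hg
  have hM : 0 ≤ M := (abs_nonneg _).trans hw
  have hh2 : h ^ 2 ≤ G * |g| := by
    rw [← sq_abs, sq]
    exact mul_le_mul (hh.trans hg) hh (abs_nonneg _) hG
  have hgh : |g * h| ≤ G * |g| := by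
    rw [abs_mul, mul_comm]
    have := mul_le_mul (hh.trans hg) le_rfl (abs_nonneg g) hG
    exact this
  have hGg : 0 ≤ G * |g| := by positivity
  have hr4 : r ^ 4 ≤ r := by
    have := pow_le_of_le_one hr0.le hr1 (n := 4) (by norm_num)
    exact this
  -- first term
  have t1 : -(8 * y ^ 2 * (G * |g|)) ≤ 8 * y ^ 2 * χ ^ 3 * (g * h) := by
    have : |8 * y ^ 2 * χ ^ 3 * (g * h)| ≤ 8 * y ^ 2 * (G * |g|) := by
      rw [abs_mul, abs_of_nonneg (by positivity : 0 ≤ 8 * y ^ 2 * χ ^ 3)]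
      apply mul_le_mul _ hgh (abs_nonneg _) (by positivity)
      nlinarith [sq_nonneg y]
    exact (abs_le.1 this).1
  have t2 : -(8 * r * (M * |g|)) ≤ -(8 * r * (y * χ ^ 3 * (w * h))) := by
    have : |y * χ ^ 3 * (w * h)| ≤ M * |g| := by
      rw [abs_mul, abs_mul, abs_mul, abs_of_nonneg hχ30]
      have A : |y| * χ ^ 3 ≤ 1 := mul_le_one₀ hy hχ30 hχ3
      have B : |w| * |h| ≤ M * |g| := mul_le_mul hw hh (abs_nonneg _) hM
      calc _ ≤ 1 * (M * |g|) := mul_le_mul A B (by positivity) (by norm_num)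
        _ = _ := one_mul _
    have := (abs_le.1 this).2
    have := mul_le_mul_of_nonneg_left this (by positivity : 0 ≤ 8 * r)
    linarith
  have t3 : 8 * y ^ 2 * χ ^ 3 * E ≤ 8 * y ^ 2 * (G * |g|) := by
    apply mul_le_mul _ hE hE0 (by positivity)
    nlinarith [sq_nonneg y]
  have hy4 : y ^ 4 ≤ 1 := by nlinarith [sq_nonneg y]
  have hh4 : h ^ 2 * r ^ 4 ≤ G * |g| * r := mul_le_mul hh2 hr4 (by positivity) hGg
  have t4 : (h * (-2 * y * r) ^ 2) ^ 2 ≤ 16 * (G * |g| * r) := by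
    have : (h * (-2 * y * r) ^ 2) ^ 2 = 16 * (h ^ 2 * r ^ 4 * y ^ 4) := by ring
    rw [this]
    have := mul_le_mul hh4 hy4 (by positivity) (by positivity)
    linarith
  have t5 : (h * χ * (-2 * r ^ 2)) ^ 2 ≤ 4 * (G * |g| * r) := by
    have : (h * χ * (-2 * r ^ 2)) ^ 2 = 4 * (h ^ 2 * r ^ 4 * χ ^ 2) := by ring
    rw [this]
    have := mul_le_mul hh4 (pow_le_one₀ (n := 2) hχ0 hχ1) (by positivity) (by positivity)
    linarith
  have t6 := mul_le_mul_of_nonneg_left t4 (by linarith : 0 ≤ 512 * V)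
  have e4 : 4 * (y * (1 / r) * g - w) * h * χ ^ 3 * (-2 * y * r)
      = -(8 * y ^ 2 * χ ^ 3 * (g * h)) + 8 * r * (y * χ ^ 3 * (w * h)) := by
    field_simp; ring
  have e5 : 4 * (y * (1 / r)) * E * χ ^ 3 * (-2 * y * r) = -(8 * y ^ 2 * χ ^ 3 * E) := by
    field_simp; ring
  rw [e4, e5]
  have p1 : 0 ≤ r * (G * |g|) := by positivity
  have p2 : 0 ≤ y ^ 2 * (M * |g|) := by positivity
  have p3 : 0 ≤ V * (y ^ 2 * (G * |g|)) := by positivity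
  have p4 : 0 ≤ y ^ 2 * (G * |g|) := by positivity
  clear_value χ
  linarith

lemma aux_core (R : ℝ) (hR : 1 ≤ R) (u u' v k p w h E : ℝ → ℝ) (a M G V : ℝ)
    (hu : ∀ x, HasDerivAt u (u' x) x)
    (hh : ∀ x, HasDerivAt h (k x) x)
    (hk : ∀ x, HasDerivAt k (v x * p x) x)
    (hp : ∀ x, HasDerivAt p ((x * (u x - a) - w x) / 4) x)
    (hw : ∀ x, HasDerivAt w (u x - a) x)
    (hE : ∀ x, HasDerivAt E (h x * u' x) x)
    (hv1 : ∀ x, 1 ≤ v x) (hvV : ∀ x, v x ≤ V)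
    (bh : ∀ x, |h x| ≤ |u x - a|) (bg : ∀ x, |u x - a| ≤ G)
    (bE0 : ∀ x, 0 ≤ E x) (bE : ∀ x, E x ≤ G * |u x - a|) (bw : ∀ x, |w x| ≤ M) :
    ∫ x in (-R)..R, (E x * (1 - x ^ 2 / R ^ 2) ^ 4
      - (16 * G + 8 * M + (8192 * V + 5120) * G) * |u x - a| * (1 / R + x ^ 2 / R ^ 2)) ≤ 0 := by
  have hR0 : 0 < R := by linarith
  have hcu : Continuous u := continuous_iff_continuousAt.2 fun x => (hu x).continuousAt
  have hcE : Continuous E := continuous_iff_continuousAt.2 fun x => (hE x).continuousAt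
  let χ : ℝ → ℝ := fun x => 1 - x ^ 2 / R ^ 2
  let c : ℝ → ℝ := fun x => -2 * x / R ^ 2
  have hχ : ∀ x, HasDerivAt χ (c x) x := fun x => by
    have := ((hasDerivAt_pow 2 x).div_const (R ^ 2)).const_sub 1
    refine this.congr_deriv ?_
    simp only [c]; push_cast; ring
  have hc : ∀ x, HasDerivAt c (-2 / R ^ 2) x := fun x => by
    have := ((hasDerivAt_id x).const_mul (-2)).div_const (R ^ 2)
    refine this.congr_deriv ?_
    ring
  let T : ℝ → ℝ := fun x => 4 * (p x * k x * χ x ^ 4) - (x * (u x - a) - w x) * h x * χ x ^ 4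
    + x * E x * χ x ^ 4 + 64 * (h x * k x * χ x ^ 2 * c x ^ 2)
  let T' : ℝ → ℝ := fun x =>
    (4 * v x * (p x * χ x ^ 2) ^ 2 + 16 * (p x * χ x ^ 2) * (k x * χ x * c x)
      + 64 * ((k x * χ x * c x) ^ 2 + v x * (p x * χ x ^ 2) * (h x * c x ^ 2)
        + 2 * (k x * χ x * c x) * (h x * c x ^ 2)
        + 2 * (k x * χ x * c x) * (h x * χ x * (-2 / R ^ 2))))
    + (E x * χ x ^ 4 - 4 * (x * (u x - a) - w x) * h x * χ x ^ 3 * c x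
      + 4 * x * E x * χ x ^ 3 * c x)
  have hT : ∀ x, HasDerivAt T (T' x) x := fun x => by
    have d1 := (((hp x).mul (hk x)).mul ((hχ x).pow 4)).const_mul 4
    have d2 := ((((hasDerivAt_id x).mul ((hu x).sub_const a)).sub (hw x)).mul (hh x)).mul
      ((hχ x).pow 4)
    have d3 := ((hasDerivAt_id x).mul (hE x)).mul ((hχ x).pow 4)
    have d4 := ((((hh x).mul (hk x)).mul ((hχ x).pow 2)).mul ((hc x).pow 2)).const_mul 64
    have := ((d1.sub d2).add d3).add d4
    refine this.congr_deriv ?_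
    simp only [T', id, Pi.mul_apply, Pi.sub_apply, Pi.pow_apply]
    push_cast
    ring
  have hχR : χ R = 0 := by simp only [χ]; field_simp; ring
  have hχR' : χ (-R) = 0 := by simp only [χ]; field_simp; ring
  have key := intervalIntegral.integral_le_sub_of_hasDeriv_right_of_le (a := -R) (b := R)
    (g := T) (g' := T') (φ := fun x => E x * (1 - x ^ 2 / R ^ 2) ^ 4
      - (16 * G + 8 * M + (8192 * V + 5120) * G) * |u x - a| * (1 / R + x ^ 2 / R ^ 2))
    (by linarith) (fun x _ => (hT x).continuousAt.continuousWithinAt)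
    (fun x _ => (hT x).hasDerivWithinAt)
    (Continuous.integrableOn_Icc (by fun_prop))
    (fun x hx => by
      have q := aux_quad (v x) (p x * χ x ^ 2) (k x * χ x * c x) (h x * c x ^ 2)
        (h x * χ x * (-2 / R ^ 2)) V (hv1 x) (hvV x)
      have r := aux_rest x R (u x - a) (w x) (h x) (E x) M G hR
        (abs_le.2 ⟨hx.1.le, hx.2.le⟩) (bh x) (bg x) (bE0 x) (bE x) (bw x) V
        ((hv1 x).trans (hvV x))
      simp only [T']
      simp only [χ, c] at q ⊢
      linarith)
  refine key.trans (le_of_eq ?_)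
  simp only [T, hχR, hχR']
  ring

lemma aux_limit (E g : ℝ → ℝ) (D G : ℝ) (hE : Continuous E) (hg : Continuous g)
    (hint : Integrable g) (hD : 0 ≤ D) (hG : 0 ≤ G)
    (bE0 : ∀ x, 0 ≤ E x) (bE : ∀ x, E x ≤ G * |g x|)
    (hle : ∀ R : ℝ, 1 ≤ R → ∫ x in (-R)..R, (E x * (1 - x ^ 2 / R ^ 2) ^ 4
      - D * |g x| * (1 / R + x ^ 2 / R ^ 2)) ≤ 0) : ∀ x, E x = 0 := by
  have hEint : Integrable E := by
    refine (hint.abs.const_mul G).mono' hE.aestronglyMeasurable (ae_of_all _ fun x => ?_)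
    rw [Real.norm_of_nonneg (bE0 x)]; exact bE x
  let f : ℕ → ℝ → ℝ := fun n => Set.indicator (Set.Ioc (-((n : ℝ) + 1)) ((n : ℝ) + 1))
    (fun x => E x * (1 - x ^ 2 / ((n : ℝ) + 1) ^ 2) ^ 4
      - D * |g x| * (1 / ((n : ℝ) + 1) + x ^ 2 / ((n : ℝ) + 1) ^ 2))
  have hlim : Tendsto (fun n => ∫ x, f n x) atTop (𝓝 (∫ x, E x)) := by
    refine tendsto_integral_of_dominated_convergence (fun x => (G + 2 * D) * |g x|) ?_
      (hint.abs.const_mul _) ?_ ?_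
    · intro n
      exact (Continuous.aestronglyMeasurable (by fun_prop)).indicator measurableSet_Ioc
    · intro n
      refine ae_of_all _ fun x => ?_
      have hb : 0 ≤ (G + 2 * D) * |g x| := by positivity
      by_cases hx : x ∈ Set.Ioc (-((n : ℝ) + 1)) ((n : ℝ) + 1)
      · simp only [f, Set.indicator_of_mem hx]
        have hR0 : 0 < (n : ℝ) + 1 := by positivity
        have hR1 : 1 ≤ (n : ℝ) + 1 := by linarith [Nat.cast_nonneg (α := ℝ) n]
        generalize (n : ℝ) + 1 = R at *
        have h1 : x ^ 2 / R ^ 2 ≤ 1 := by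
          rw [div_le_one (by positivity)]
          exact sq_le_sq' hx.1.le hx.2
        have h0 : 0 ≤ x ^ 2 / R ^ 2 := by positivity
        have h2 : 1 / R ≤ 1 := by rw [div_le_one hR0]; exact hR1
        have h20 : 0 ≤ 1 / R := by positivity
        have h3 : (1 - x ^ 2 / R ^ 2) ^ 4 ≤ 1 := pow_le_one₀ (by linarith) (by linarith)
        have h30 : 0 ≤ (1 - x ^ 2 / R ^ 2) ^ 4 := pow_nonneg (by linarith) 4
        have A : E x * (1 - x ^ 2 / R ^ 2) ^ 4 ≤ G * |g x| := by
          have := mul_le_mul (bE x) h3 h30 (by positivity)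
          linarith
        have A0 : 0 ≤ E x * (1 - x ^ 2 / R ^ 2) ^ 4 := mul_nonneg (bE0 x) h30
        have B : D * |g x| * (1 / R + x ^ 2 / R ^ 2) ≤ D * |g x| * 2 :=
          mul_le_mul_of_nonneg_left (by linarith) (by positivity)
        have B0 : 0 ≤ D * |g x| * (1 / R + x ^ 2 / R ^ 2) := by positivity
        have C0 : 0 ≤ G * |g x| := by positivity
        rw [Real.norm_eq_abs, abs_le]
        constructor <;> nlinarith
      · simp only [f, Set.indicator_of_notMem hx, norm_zero]
        exact hb
    · refine ae_of_all _ fun x => ?_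
      have l0 : Tendsto (fun n : ℕ => 1 / ((n : ℝ) + 1)) atTop (𝓝 0) :=
        tendsto_one_div_add_atTop_nhds_zero_nat
      have l1 : Tendsto (fun n : ℕ => x ^ 2 / ((n : ℝ) + 1) ^ 2) atTop (𝓝 0) := by
        have := (l0.pow 2).const_mul (x ^ 2)
        simp only [ne_eq, OfNat.ofNat_ne_zero, not_false_eq_true, zero_pow, mul_zero] at this
        refine this.congr fun n => ?_
        rw [div_pow, one_pow, mul_one_div]
      have l2 := (((l1.const_sub 1).pow 4).const_mul (E x)).sub
        ((l0.add l1).const_mul (D * |g x|))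
      simp only [sub_zero, one_pow, mul_one, add_zero, mul_zero] at l2
      refine l2.congr' ?_
      obtain ⟨N, hN⟩ := exists_nat_gt |x|
      filter_upwards [eventually_ge_atTop N] with n hn
      have hn' : (N : ℝ) ≤ n := by exact_mod_cast hn
      have hx : x ∈ Set.Ioc (-((n : ℝ) + 1)) ((n : ℝ) + 1) := by
        have := abs_lt.1 hN
        constructor <;> linarith
      simp only [f, Set.indicator_of_mem hx]
  have hle0 : ∫ x, E x ≤ 0 := by
    refine le_of_tendsto' hlim fun n => ?_
    have hR1 : 1 ≤ (n : ℝ) + 1 := by linarith [Nat.cast_nonneg (α := ℝ) n]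
    have := hle _ hR1
    rw [intervalIntegral.integral_of_le (by linarith)] at this
    simp only [f]
    rw [integral_indicator measurableSet_Ioc]
    exact this
  have h0 : ∫ x, E x = 0 := le_antisymm hle0 (integral_nonneg bE0)
  have h1 := (integral_eq_zero_iff_of_nonneg bE0 hEint).1 h0
  have h2 := (Continuous.ae_eq_iff_eq volume hE continuous_const).1 h1
  intro x
  exact congrFun h2 x

/-- If a graph-like forward self-similar profile `φ` is globally Lipschitz
(`φ'` bounded) and `φ' - a₀` is integrable on `ℝ`, then `φ(x₁) = a₀ x₁`. -/
theorem stmt_10 (φ v k : ℝ → ℝ) (hφ : ContDiff ℝ (⊤ : ℕ∞) φ)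
    (hv : ∀ x, v x = Real.sqrt (1 + deriv φ x ^ 2))
    (hk : ∀ x, k x = deriv (deriv φ) x / v x ^ 3)
    (hprofile : ∀ x : ℝ,
      (φ x - x * deriv φ x) / 4 = -deriv (fun t => deriv k t / v t) x)
    (K : ℝ) (hLip : ∀ x : ℝ, |deriv φ x| ≤ K)
    (a₀ : ℝ)
    (hint : MeasureTheory.Integrable (fun τ => deriv φ τ - a₀)) :
    ∀ x₁ : ℝ, φ x₁ = a₀ * x₁ := by
  have hK : 0 ≤ K := (abs_nonneg _).trans (hLip 0)
  have su : ContDiff ℝ (⊤ : ℕ∞) (deriv φ) := (contDiff_infty_iff_deriv.1 hφ).2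
  have su' : ContDiff ℝ (⊤ : ℕ∞) (deriv (deriv φ)) := (contDiff_infty_iff_deriv.1 su).2
  have hv1 : ∀ x, 1 ≤ v x := fun x => by
    rw [hv]; exact Real.one_le_sqrt.2 (by nlinarith [sq_nonneg (deriv φ x)])
  have hv0 : ∀ x, v x ≠ 0 := fun x => by linarith [hv1 x] |> fun h : 0 < v x => h.ne'
  have sv : ContDiff ℝ (⊤ : ℕ∞) v := by
    rw [show v = fun x => Real.sqrt (1 + deriv φ x ^ 2) from funext hv]
    exact (contDiff_const.add (su.pow 2)).sqrt (fun x => by positivity)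
  have sk : ContDiff ℝ (⊤ : ℕ∞) k := by
    rw [show k = fun x => deriv (deriv φ) x / v x ^ 3 from funext hk]
    exact su'.div (sv.pow 3) (fun x => pow_ne_zero _ (hv0 x))
  have sk' : ContDiff ℝ (⊤ : ℕ∞) (deriv k) := (contDiff_infty_iff_deriv.1 sk).2
  have sp : ContDiff ℝ (⊤ : ℕ∞) (fun t => deriv k t / v t) := sk'.div sv hv0
  have dd : ∀ {f : ℝ → ℝ}, ContDiff ℝ (⊤ : ℕ∞) f → ∀ x, HasDerivAt f (deriv f x) x :=
    fun hf x => (hf.differentiable (by simp) x).hasDerivAt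
  have hw : ∀ x, HasDerivAt (fun x => φ x - a₀ * x) (deriv φ x - a₀) x := fun x => by
    have := (dd hφ x).sub ((hasDerivAt_id x).const_mul a₀)
    refine this.congr_deriv (by simp)
  have hgc : Continuous (fun x => deriv φ x - a₀) := su.continuous.sub continuous_const
  -- bound on w
  obtain ⟨M, hM⟩ : ∃ M, ∀ x, |φ x - a₀ * x| ≤ M := by
    refine ⟨|φ 0 - a₀ * 0| + ∫ t, |deriv φ t - a₀|, fun x => ?_⟩
    have h1 := intervalIntegral.integral_eq_sub_of_hasDerivAt (a := 0) (b := x)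
      (fun y _ => hw y) (hgc.intervalIntegrable _ _)
    have h2 : |∫ t in (0 : ℝ)..x, (deriv φ t - a₀)| ≤ ∫ t, |deriv φ t - a₀| := by
      have := intervalIntegral.norm_integral_le_integral_norm_uIoc (a := 0) (b := x)
        (f := fun t => deriv φ t - a₀) (μ := volume)
      refine this.trans ?_
      exact setIntegral_le_integral hint.norm (ae_of_all _ fun t => norm_nonneg _)
    have h3 : φ x - a₀ * x = (φ 0 - a₀ * 0) + ∫ t in (0 : ℝ)..x, (deriv φ t - a₀) := by
      rw [h1]; ring
    rw [h3]
    exact (abs_add_le _ _).trans (by linarith)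
  have hM0 : 0 ≤ M := (abs_nonneg _).trans (hM 0)
  have bg : ∀ x, |deriv φ x - a₀| ≤ K + |a₀| := fun x =>
    (abs_sub _ _).trans (by linarith [hLip x])
  have hvV : ∀ x, v x ≤ 1 + K := fun x => by
    rw [hv, Real.sqrt_le_left (by linarith)]
    have : deriv φ x ^ 2 ≤ K ^ 2 := by
      rw [← sq_abs]; exact pow_le_pow_left₀ (abs_nonneg _) (hLip x) 2
    nlinarith
  let h : ℝ → ℝ := fun x => deriv φ x / Real.sqrt (1 + deriv φ x ^ 2)
    - a₀ / Real.sqrt (1 + a₀ ^ 2)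
  let E : ℝ → ℝ := fun x => Real.sqrt (1 + deriv φ x ^ 2)
    - (1 + a₀ * deriv φ x) / Real.sqrt (1 + a₀ ^ 2)
  have bh : ∀ x, |h x| ≤ |deriv φ x - a₀| := fun x => aux_lip _ _
  have bE0 : ∀ x, 0 ≤ E x := fun x => (aux_E _ _).1
  have bE : ∀ x, E x ≤ (K + |a₀|) * |deriv φ x - a₀| := fun x => by
    have h1 : E x ≤ (deriv φ x - a₀) * h x := aux_E_le _ _
    refine h1.trans ((le_abs_self _).trans ?_)
    rw [abs_mul]
    exact mul_le_mul (bg x) (bh x) (abs_nonneg _) (by positivity)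
  have dh : ∀ x, HasDerivAt h (k x) x := fun x => by
    have := ((aux_q (deriv φ x)).comp x (dd su x)).sub_const (a₀ / Real.sqrt (1 + a₀ ^ 2))
    refine this.congr_deriv ?_
    rw [hk, hv]; ring
  have dE : ∀ x, HasDerivAt E (h x * deriv (deriv φ) x) x := fun x => by
    have := ((aux_F (deriv φ x)).comp x (dd su x)).sub
      ((((dd su x).const_mul a₀).const_add 1).div_const (Real.sqrt (1 + a₀ ^ 2)))
    refine this.congr_deriv ?_
    simp only [h]; ring
  have hcE : Continuous E := continuous_iff_continuousAt.2 fun x => (dE x).continuousAt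
  have hG : 0 ≤ K + |a₀| := by positivity
  have hE := aux_limit E (fun x => deriv φ x - a₀)
    (16 * (K + |a₀|) + 8 * M + (8192 * (1 + K) + 5120) * (K + |a₀|)) (K + |a₀|) hcE hgc hint
    (by positivity) hG bE0 bE (fun R hR =>
      aux_core R hR (deriv φ) (deriv (deriv φ)) v k (fun t => deriv k t / v t)
        (fun x => φ x - a₀ * x) h E a₀ M (K + |a₀|) (1 + K) (dd su) dh
        (fun x => (dd sk x).congr_deriv (by field_simp [hv0 x]))
        (fun x => (dd sp x).congr_deriv (by have := hprofile x; linarith))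
        hw dE hv1 hvV bh bg bE0 bE hM)
  have hu : ∀ x, deriv φ x = a₀ := fun x => (aux_E _ _).2 (hE x)
  have hk0 : k = fun _ => 0 := by
    funext x
    rw [hk, show deriv φ = fun _ => a₀ from funext hu]
    simp
  intro x
  have := hprofile x
  rw [hk0, hu] at this
  simp at this
  linarith
end
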